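/- Let R be a commutative ring, z ∈ R, and A : ℕ × ℕ → R a family of elements satisfying z·A(i,0)·A(0,j) = A(i+1,j) − A(i,j+1) for all i, j ≥ 0. For i, j ∈ ℕ define D(i,j) ∈ R ⊗ R by D(i,j) = A(i,j) ⊗ 1 + 1 ⊗ A(i,j) + z·∑_{k=0}^{i−1} A(k,0) ⊗ A(i−1−k, j) − z·∑_{l=0}^{j−1} A(0,l) ⊗ A(i, j−1−l) − z²·∑_{k=0}^{i−1} ∑_{l=0}^{j−1} A(k,0)·A(0,l) ⊗ A(i−1−k, j−1−l). Then for every n ≥ 1, ∑_{k=0}^{n−1} D(k, n−1−k) = (∑_{k=0}^{n−1} A(k, n−1−k)) ⊗ 1 + 1 ⊗ (∑_{k=0}^{n−1} A(k, n−1−k)). -/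

import Mathlib

open scoped TensorProduct

/-- The skein relation telescopes along an antidiagonal. -/
theorem sum_range_skein {R : Type*} [CommRing R] (z : R) (A : ℕ → ℕ → R)
    (hA : ∀ i j : ℕ, z * A i 0 * A 0 j = A (i + 1) j - A i (j + 1)) (m : ℕ) :
    ∑ p ∈ Finset.range m, z ^ 2 * (A p 0 * A 0 (m - 1 - p)) = z * A m 0 - z * A 0 m := by
  have h : ∀ p ∈ Finset.range m, z ^ 2 * (A p 0 * A 0 (m - 1 - p)) =
      z * A (p + 1) (m - (p + 1)) - z * A p (m - p) := by
    intro p hp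
    have hp := Finset.mem_range.mp hp
    have e := hA p (m - 1 - p)
    rw [show m - 1 - p + 1 = m - p by omega] at e
    rw [show m - (p + 1) = m - 1 - p by omega, ← mul_sub, ← e]
    ring
  rw [Finset.sum_congr rfl h, Finset.sum_range_sub (fun p => z * A p (m - p))]
  simp

section Reindex

variable {M : Type*} [AddCommMonoid M] (n : ℕ)

/-- Reindexing of a triangular double sum by the last two of three indices with fixed total,
splitting the first index. -/
theorem sum_range_split_left (F : ℕ → ℕ → ℕ → M) :
    ∑ i ∈ Finset.range n, ∑ k ∈ Finset.range i, F k (i - 1 - k) (n - 1 - i) =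
      ∑ a ∈ Finset.range n, ∑ b ∈ Finset.range (n - 1 - a), F (n - 2 - a - b) a b := by
  rw [Finset.sum_sigma', Finset.sum_sigma']
  refine Finset.sum_nbij' (fun x => ⟨x.1 - 1 - x.2, n - 1 - x.1⟩)
    (fun x => ⟨n - 1 - x.2, n - 2 - x.1 - x.2⟩) ?_ ?_ ?_ ?_ ?_ <;>
    rintro ⟨x, y⟩ h <;> simp only [Finset.mem_sigma, Finset.mem_range, Sigma.mk.injEq,
      heq_eq_eq] at h ⊢
  any_goals omega
  congr 1; omega

/-- Reindexing of a triangular double sum by the last two of three indices with fixed total,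
splitting the second index. -/
theorem sum_range_split_right (F : ℕ → ℕ → ℕ → M) :
    ∑ i ∈ Finset.range n, ∑ l ∈ Finset.range (n - 1 - i), F l i (n - 1 - i - 1 - l) =
      ∑ a ∈ Finset.range n, ∑ b ∈ Finset.range (n - 1 - a), F (n - 2 - a - b) a b := by
  refine Finset.sum_congr rfl fun i _ => ?_
  rw [← Finset.sum_range_reflect]
  refine Finset.sum_congr rfl fun l hl => ?_
  have := Finset.mem_range.mp hl
  congr 1 <;> omega

/-- Reindexing of a triangular triple sum of four indices with fixed total. -/
theorem sum_range_split_both (F : ℕ → ℕ → ℕ → ℕ → M) :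
    ∑ i ∈ Finset.range n, ∑ k ∈ Finset.range i, ∑ l ∈ Finset.range (n - 1 - i),
        F k l (i - 1 - k) (n - 1 - i - 1 - l) =
      ∑ a ∈ Finset.range n, ∑ b ∈ Finset.range (n - 1 - a), ∑ p ∈ Finset.range (n - 2 - a - b),
        F p (n - 2 - a - b - 1 - p) a b := by
  simp only [Finset.sum_sigma']
  refine Finset.sum_nbij' (fun x => ⟨x.1 - 1 - x.2.1, n - 1 - x.1 - 1 - x.2.2, x.2.1⟩)
    (fun x => ⟨x.1 + 1 + x.2.2, x.2.2, n - 2 - x.1 - x.2.1 - 1 - x.2.2⟩) ?_ ?_ ?_ ?_ ?_ <;>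
    rintro ⟨x, y, w⟩ h <;> simp only [Finset.mem_sigma, Finset.mem_range, Sigma.mk.injEq,
      heq_eq_eq, true_and, and_true] at h ⊢
  any_goals omega
  congr 1; omega

end Reindex

theorem stmt_0 {R : Type*} [CommRing R] (z : R) (A : ℕ → ℕ → R)
    (hA : ∀ i j : ℕ, z * A i 0 * A 0 j = A (i + 1) j - A i (j + 1))
    (D : ℕ → ℕ → R ⊗[ℤ] R)
    (hD : ∀ i j : ℕ,
      D i j = A i j ⊗ₜ[ℤ] (1 : R) + (1 : R) ⊗ₜ[ℤ] A i j
        + ∑ k ∈ Finset.range i, (z * A k 0) ⊗ₜ[ℤ] A (i - 1 - k) j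
        - ∑ l ∈ Finset.range j, (z * A 0 l) ⊗ₜ[ℤ] A i (j - 1 - l)
        - ∑ k ∈ Finset.range i, ∑ l ∈ Finset.range j,
            (z ^ 2 * (A k 0 * A 0 l)) ⊗ₜ[ℤ] A (i - 1 - k) (j - 1 - l))
    (n : ℕ) (hn : 1 ≤ n) :
    ∑ k ∈ Finset.range n, D k (n - 1 - k)
      = (∑ k ∈ Finset.range n, A k (n - 1 - k)) ⊗ₜ[ℤ] (1 : R)
        + (1 : R) ⊗ₜ[ℤ] (∑ k ∈ Finset.range n, A k (n - 1 - k)) := by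
  have key : ∑ i ∈ Finset.range n, ∑ k ∈ Finset.range i, ∑ l ∈ Finset.range (n - 1 - i),
        (z ^ 2 * (A k 0 * A 0 l)) ⊗ₜ[ℤ] A (i - 1 - k) (n - 1 - i - 1 - l) =
      ∑ i ∈ Finset.range n, ∑ k ∈ Finset.range i,
        (z * A k 0) ⊗ₜ[ℤ] A (i - 1 - k) (n - 1 - i) -
      ∑ i ∈ Finset.range n, ∑ l ∈ Finset.range (n - 1 - i),
        (z * A 0 l) ⊗ₜ[ℤ] A i (n - 1 - i - 1 - l) := by
    rw [sum_range_split_both n fun k l a b => (z ^ 2 * (A k 0 * A 0 l)) ⊗ₜ[ℤ] A a b,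
      sum_range_split_left n fun k a b => (z * A k 0) ⊗ₜ[ℤ] A a b,
      sum_range_split_right n fun l a b => (z * A 0 l) ⊗ₜ[ℤ] A a b]
    simp only [← TensorProduct.sum_tmul, sum_range_skein z A hA, TensorProduct.sub_tmul,
      Finset.sum_sub_distrib]
  simp only [hD, Finset.sum_sub_distrib, Finset.sum_add_distrib, key, TensorProduct.sum_tmul,
    TensorProduct.tmul_sum]
  abel
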